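/- Let n ≥ 1, let A ∈ M_n(ℝ), regarded also as a complex n×n matrix, let c, d > 0 be real numbers, let ω ∈ ℝ, and let H = fromBlocks A (c·I) (−d·I) (−Aᵀ) ∈ M_{2n}(ℝ). Then iω is an eigenvalue of H (regarded as a complex matrix) if and only if c·d is an eigenvalue of the positive semidefinite Hermitian matrix (A − iωI)(A − iωI)ᴴ, equivalently if and only if √(cd) is a singular value of A − iωI. -/

import Mathlib

open Matrix

/-! For commuting lower blocks `C`, `D`, a block matrix has determinant `det (A * D - B * C)`. The
lower-left block of `μI - H` is scalar, so `det (μI - H) = det (cdI - (A - μI) * (Aᴴ + μI))`, and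
`Aᴴ + μI = (A - μI)ᴴ` as soon as `star μ = -μ`. -/

section Determinant

variable {m R : Type*} [Fintype m] [DecidableEq m] [CommRing R]

theorem det_fromBlocks_mul_det_of_commute (A B : Matrix m m R) {C D : Matrix m m R}
    (hCD : Commute C D) :
    (fromBlocks A B C D).det * D.det = (A * D - B * C).det * D.det := by
  have triangularize : fromBlocks A B C D * fromBlocks D 0 (-C) 1 =
      fromBlocks (A * D - B * C) B 0 D := by
    simp [fromBlocks_multiply, hCD.eq, sub_eq_add_neg]
  simpa using congrArg det triangularize

theorem det_fromBlocks_of_commute (A B : Matrix m m R) {C D : Matrix m m R}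
    (hCD : Commute C D) :
    (fromBlocks A B C D).det = (A * D - B * C).det := by
  -- Over `R[X]` the block `X + D` has monic, hence cancellable, determinant; then put `X = 0`.
  let lift : Matrix m m R →+* Matrix m m (Polynomial R) := Polynomial.C.mapMatrix
  let ev : Polynomial R →+* R := Polynomial.evalRingHom 0
  have ev_lift (M : Matrix m m R) : ev.mapMatrix (lift M) = M := by
    ext i j
    simp [ev, lift]
  have ev_charmatrix : ev.mapMatrix (charmatrix (-D)) = D := by
    ext i j
    simp [ev, charmatrix_apply, diagonal_apply, apply_ite]
  have hcomm : Commute (lift C) (charmatrix (-D)) :=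
    (scalar_commute _ (Commute.all _) _).symm.sub_right ((hCD.neg_right).map lift)
  have hdet : (fromBlocks (lift A) (lift B) (lift C) (charmatrix (-D))).det =
      (lift A * charmatrix (-D) - lift B * lift C).det :=
    (charpoly_monic (-D)).isRegular.right (det_fromBlocks_mul_det_of_commute _ _ hcomm)
  have hblocks : ev.mapMatrix (fromBlocks (lift A) (lift B) (lift C) (charmatrix (-D))) =
      fromBlocks A B C D := by
    rw [RingHom.mapMatrix_apply, fromBlocks_map]
    simp only [← RingHom.mapMatrix_apply, ev_lift, ev_charmatrix]
  simpa only [RingHom.map_det, hblocks, map_sub, map_mul, ev_lift, ev_charmatrix]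
    using congrArg ev hdet

end Determinant

theorem conjTranspose_sub_smul_one_of_mem_skewAdjoint {m R : Type*} [DecidableEq m] [CommRing R]
    [StarRing R] (A : Matrix m m R) {μ : R} (hμ : μ ∈ skewAdjoint R) :
    (A - μ • (1 : Matrix m m R))ᴴ = Aᴴ + μ • 1 := by
  rw [conjTranspose_sub, conjTranspose_smul, conjTranspose_one, skewAdjoint.mem_iff.mp hμ,
    neg_smul, sub_neg_eq_add]

section Spectrum

variable {m R : Type*} [Fintype m] [DecidableEq m] [CommRing R]

theorem mem_spectrum_fromBlocks_smul_one_iff (P Q : Matrix m m R) (b c μ : R) :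
    μ ∈ spectrum R (fromBlocks P (b • (1 : Matrix m m R)) (c • (1 : Matrix m m R)) Q) ↔
      b * c ∈ spectrum R ((μ • 1 - P) * (μ • 1 - Q)) := by
  have hblocks : μ • 1 - fromBlocks P (b • (1 : Matrix m m R)) (c • (1 : Matrix m m R)) Q =
      fromBlocks (μ • 1 - P) (-(b • (1 : Matrix m m R))) (-(c • (1 : Matrix m m R)))
        (μ • 1 - Q) := by
    rw [← fromBlocks_one, fromBlocks_smul, sub_eq_add_neg, fromBlocks_neg, fromBlocks_add]
    simp only [smul_zero, zero_add, sub_eq_add_neg]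
  have hcomm : Commute (-(c • (1 : Matrix m m R))) (μ • 1 - Q) :=
    ((Commute.one_left _).smul_left c).neg_left
  have hbc : -(b • (1 : Matrix m m R)) * -(c • (1 : Matrix m m R)) = (b * c) • 1 := by
    simp [smul_smul, mul_comm]
  rw [spectrum.mem_iff, spectrum.mem_iff, Algebra.algebraMap_eq_smul_one,
    Algebra.algebraMap_eq_smul_one, hblocks, isUnit_iff_isUnit_det,
    det_fromBlocks_of_commute _ _ hcomm, ← isUnit_iff_isUnit_det, hbc, IsUnit.sub_iff]

theorem mem_spectrum_fromBlocks_neg_conjTranspose_iff [StarRing R] (A : Matrix m m R)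
    (c d : R) {μ : R} (hμ : μ ∈ skewAdjoint R) :
    μ ∈ spectrum R (fromBlocks A (c • (1 : Matrix m m R)) ((-d) • (1 : Matrix m m R)) (-Aᴴ)) ↔
      c * d ∈ spectrum R ((A - μ • (1 : Matrix m m R)) * (A - μ • (1 : Matrix m m R))ᴴ) := by
  have hprod : (μ • 1 - A) * (μ • 1 - -Aᴴ) =
      -((A - μ • (1 : Matrix m m R)) * (A - μ • (1 : Matrix m m R))ᴴ) := by
    rw [conjTranspose_sub_smul_one_of_mem_skewAdjoint A hμ, ← neg_mul, neg_sub, sub_neg_eq_add,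
      add_comm Aᴴ]
  rw [mem_spectrum_fromBlocks_smul_one_iff, hprod, mul_neg, ← spectrum.neg_eq, Set.neg_mem_neg]

end Spectrum

theorem mem_spectrum_iff_exists_mulVec_eq_smul {m K : Type*} [Fintype m] [DecidableEq m] [Field K]
    (M : Matrix m m K) (μ : K) : μ ∈ spectrum K M ↔ ∃ v : m → K, v ≠ 0 ∧ M *ᵥ v = μ • v := by
  rw [← spectrum_toLin', ← Module.End.hasEigenvalue_iff_mem_spectrum]
  constructor
  · intro hμ
    obtain ⟨v, hv⟩ := hμ.exists_hasEigenvector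
    exact ⟨v, hv.2, hv.apply_eq_smul⟩
  · rintro ⟨v, hv_ne, hv⟩
    exact Module.End.hasEigenvalue_of_hasEigenvector
      (Module.End.hasEigenvector_iff.mpr ⟨Module.End.mem_eigenspace_iff.mpr hv, hv_ne⟩)

theorem map_ofReal_fromBlocks_neg_transpose {m : Type*} [DecidableEq m] (A : Matrix m m ℝ)
    (c d : ℝ) :
    (fromBlocks A (c • (1 : Matrix m m ℝ)) ((-d) • (1 : Matrix m m ℝ)) (-Aᵀ)).map Complex.ofReal =
      fromBlocks (A.map Complex.ofReal) ((c : ℂ) • (1 : Matrix m m ℂ))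
        ((-(d : ℂ)) • (1 : Matrix m m ℂ)) (-(A.map Complex.ofReal)ᴴ) := by
  have map_smul_one (r : ℝ) :
      (r • (1 : Matrix m m ℝ)).map Complex.ofReal = (r : ℂ) • (1 : Matrix m m ℂ) := by
    rw [smul_one_eq_diagonal, smul_one_eq_diagonal, diagonal_map Complex.ofReal_zero]
  have map_neg_transpose : (-Aᵀ).map Complex.ofReal = -(A.map Complex.ofReal)ᴴ := by
    ext i j
    simp
  rw [fromBlocks_map, map_smul_one, map_smul_one, map_neg_transpose, Complex.ofReal_neg]

theorem stmt_9_general {m K : Type*} [Fintype m] [DecidableEq m] [Field K] [StarRing K]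
    (A : Matrix m m K) (c d : K) {μ : K} (hμ : μ ∈ skewAdjoint K) :
    (μ ∈ spectrum K
        (fromBlocks A (c • (1 : Matrix m m K)) ((-d) • (1 : Matrix m m K)) (-Aᴴ)) ↔
      c * d ∈ spectrum K ((A - μ • (1 : Matrix m m K)) * (A - μ • (1 : Matrix m m K))ᴴ)) ∧
    (c * d ∈ spectrum K ((A - μ • (1 : Matrix m m K)) * (A - μ • (1 : Matrix m m K))ᴴ) ↔
      ∃ v : m → K, v ≠ 0 ∧
        ((A - μ • (1 : Matrix m m K)) * (A - μ • (1 : Matrix m m K))ᴴ) *ᵥ v = (c * d) • v) :=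
  ⟨mem_spectrum_fromBlocks_neg_conjTranspose_iff A c d hμ,
    mem_spectrum_iff_exists_mulVec_eq_smul _ _⟩

/-- The eigenvalue characterization underlying the proof of Lemma 2: `iω` is an
eigenvalue of the Hamiltonian `fromBlocks A (c·I) (−d·I) (−Aᵀ)` if and only if `cd` is
an eigenvalue of `(A − iωI)(A − iωI)ᴴ`, equivalently if and only if `√(cd)` is a
singular value of `A − iωI` (i.e. `cd` has an eigenvector for `(A − iωI)(A − iωI)ᴴ`). -/
theorem stmt_9 (n : ℕ) (hn : 1 ≤ n) (A : Matrix (Fin n) (Fin n) ℝ) (c d : ℝ)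
    (hc : 0 < c) (hd : 0 < d) (ω : ℝ) :
    (Complex.I * (ω : ℂ) ∈
        spectrum ℂ ((Matrix.fromBlocks A (c • (1 : Matrix (Fin n) (Fin n) ℝ))
          ((-d) • (1 : Matrix (Fin n) (Fin n) ℝ)) (-Aᵀ)).map Complex.ofReal) ↔
      ((c * d : ℝ) : ℂ) ∈
        spectrum ℂ
          ((A.map Complex.ofReal - ((ω : ℂ) * Complex.I) • (1 : Matrix (Fin n) (Fin n) ℂ)) *
            (A.map Complex.ofReal - ((ω : ℂ) * Complex.I) • (1 : Matrix (Fin n) (Fin n) ℂ))ᴴ)) ∧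
    (((c * d : ℝ) : ℂ) ∈
        spectrum ℂ
          ((A.map Complex.ofReal - ((ω : ℂ) * Complex.I) • (1 : Matrix (Fin n) (Fin n) ℂ)) *
            (A.map Complex.ofReal - ((ω : ℂ) * Complex.I) • (1 : Matrix (Fin n) (Fin n) ℂ))ᴴ) ↔
      ∃ v : Fin n → ℂ, v ≠ 0 ∧
        ((A.map Complex.ofReal - ((ω : ℂ) * Complex.I) • (1 : Matrix (Fin n) (Fin n) ℂ)) *
            (A.map Complex.ofReal -
              ((ω : ℂ) * Complex.I) • (1 : Matrix (Fin n) (Fin n) ℂ))ᴴ).mulVec v =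
          ((c * d : ℝ) : ℂ) • v) := by
  rw [map_ofReal_fromBlocks_neg_transpose, mul_comm Complex.I, Complex.ofReal_mul]
  exact stmt_9_general _ _ _ (skewAdjoint.mem_iff.mpr (by simp))
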